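/- ℓ2 bound on the change in rerouted weight: let e_v := 0 and let γ = Σ_{u ∈ I_adapt ∪ I'_adapt} (e'_u − e_u), where I'_adapt is the set of adaptive users of the neighboring input and e'_u, e_u are taken to be 0 for users not in the respective adaptive sets. Then Σ_{i ∈ (∪_{u ∈ I} S_u) ∪ S_v} (w'_reroute(i) − w_reroute(i))² ≤ α²γ²/d_max, where w_reroute(i) is taken to be 0 for items i ∉ ∪_{u ∈ I} S_u. -/

import Mathlib

/-!
Adding a user only enlarges the initial weights, and the excess fraction, which is
`max (0, 1 - τ / w)` at initial weight `w > 0` and `0` at `w = 0`, is monotone in `w`. Hence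
no user's excess decreases: every `δ u = e'_u - e_u` is
nonnegative (`rFrac_mono`, `eUser_mono`). The change in rerouted weight on an item `i` is `α / dmax`
times `f i = ∑ δ u` over the adaptive users `u` holding `i`.
By nonnegativity each `f i` is at most `γ = ∑ δ u`. Double counting gives
`∑ f i = ∑ δ u * |S u| ≤ dmax * γ`, since adaptive users have at most `dmax` items. Therefore
`∑ (f i) ^ 2 ≤ γ * ∑ f i ≤ dmax * γ ^ 2` (`sum_sq_le_of_card_le`), and multiplying by
`(α / dmax) ^ 2` yields the bound.
-/

open Finset

/-- The set of adaptive users: those `u ∈ I` with `⌈1/b_min²⌉ ≤ |S_u| ≤ d_max`. -/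
noncomputable def adaptSet {ι A : Type*} (I : Finset ι) (S : ι → Finset A)
    (bmin dmax : ℝ) : Finset ι :=
  I.filter (fun u => ⌈1 / bmin ^ 2⌉₊ ≤ (S u).card ∧ ((S u).card : ℝ) ≤ dmax)

/-- Initial weights: `w_init(i) = Σ_{u ∈ I_adapt, i ∈ S_u} 1/|S_u|`. -/
noncomputable def wInit {ι A : Type*} [DecidableEq A] (I : Finset ι) (S : ι → Finset A)
    (bmin dmax : ℝ) (i : A) : ℝ :=
  ∑ u ∈ (adaptSet I S bmin dmax).filter (fun u => i ∈ S u), (1 : ℝ) / (S u).card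

/-- Truncated weights: `w_trunc(i) = min{w_init(i), τ}`. -/
noncomputable def wTrunc {ι A : Type*} [DecidableEq A] (I : Finset ι) (S : ι → Finset A)
    (bmin dmax τ : ℝ) (i : A) : ℝ :=
  min (wInit I S bmin dmax i) τ

/-- Excess fraction: `r(i) = (w_init(i) − w_trunc(i))/w_init(i)` when `w_init(i) > 0`,
and `0` otherwise. -/
noncomputable def rFrac {ι A : Type*} [DecidableEq A] (I : Finset ι) (S : ι → Finset A)
    (bmin dmax τ : ℝ) (i : A) : ℝ :=
  if 0 < wInit I S bmin dmax i then
    (wInit I S bmin dmax i - wTrunc I S bmin dmax τ i) / wInit I S bmin dmax i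
  else 0

/-- Excess weight returned to a user: `e_u = (1/|S_u|)·Σ_{i ∈ S_u} r(i)`. -/
noncomputable def eUser {ι A : Type*} [DecidableEq A] (I : Finset ι) (S : ι → Finset A)
    (bmin dmax τ : ℝ) (u : ι) : ℝ :=
  (1 / ((S u).card : ℝ)) * ∑ i ∈ S u, rFrac I S bmin dmax τ i

/-- Rerouted weights: `w_reroute(i) = Σ_{u ∈ I_adapt, i ∈ S_u} α·e_u/d_max`. -/
noncomputable def wReroute {ι A : Type*} [DecidableEq A] (I : Finset ι) (S : ι → Finset A)
    (bmin dmax τ α : ℝ) (i : A) : ℝ :=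
  ∑ u ∈ (adaptSet I S bmin dmax).filter (fun u => i ∈ S u),
    α * eUser I S bmin dmax τ u / dmax

/-- Final MAD weight:
`w(i) = w_trunc(i) + w_reroute(i) + Σ_{u ∈ I_adapt, i ∈ S_u} (w_b^u(i) − 1/|S_u|)
      + Σ_{u ∈ I∖I_adapt, i ∈ S_u} w_b^u(i)`. -/
noncomputable def wFinal {ι A : Type*} [DecidableEq ι] [DecidableEq A] (I : Finset ι)
    (S : ι → Finset A) (bmin dmax τ α : ℝ) (wb : ι → A → ℝ) (i : A) : ℝ :=
  wTrunc I S bmin dmax τ i + wReroute I S bmin dmax τ α i +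
    (∑ u ∈ (adaptSet I S bmin dmax).filter (fun u => i ∈ S u),
      (wb u i - 1 / ((S u).card : ℝ))) +
    ∑ u ∈ (I \ adaptSet I S bmin dmax).filter (fun u => i ∈ S u), wb u i

/-- An `ℓ²` bound of the form `ℓ∞ · ℓ¹`: if every `u ∈ T` spreads a nonnegative mass `δ u` onto each
of its at most `d` items, the squared `ℓ²` norm of the received mass is at most
`d * (∑ u ∈ T, δ u) ^ 2`. -/
lemma sum_sq_le_of_card_le {ι A : Type*} [DecidableEq A] (T : Finset ι) (S : ι → Finset A)
    (X : Finset A) (δ : ι → ℝ) (d : ℝ) (hδ : ∀ u ∈ T, 0 ≤ δ u)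
    (hd : ∀ u ∈ T, ((S u).card : ℝ) ≤ d) :
    ∑ i ∈ X, (∑ u ∈ T.filter (fun u => i ∈ S u), δ u) ^ 2 ≤ d * (∑ u ∈ T, δ u) ^ 2 := by
  have hγ : 0 ≤ ∑ u ∈ T, δ u := sum_nonneg hδ
  have hl1 : ∑ i ∈ X, ∑ u ∈ T.filter (fun u => i ∈ S u), δ u ≤ d * ∑ u ∈ T, δ u := by
    simp_rw [sum_filter]
    rw [sum_comm, mul_sum]
    refine sum_le_sum fun u hu => ?_
    rw [← sum_filter, sum_const, nsmul_eq_mul]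
    refine mul_le_mul_of_nonneg_right (le_trans ?_ (hd u hu)) (hδ u hu)
    exact_mod_cast card_le_card fun i hi => (mem_filter.1 hi).2
  calc ∑ i ∈ X, (∑ u ∈ T.filter (fun u => i ∈ S u), δ u) ^ 2
      ≤ ∑ i ∈ X, (∑ u ∈ T, δ u) * ∑ u ∈ T.filter (fun u => i ∈ S u), δ u := by
        refine sum_le_sum fun i _ => ?_
        rw [sq]
        exact mul_le_mul_of_nonneg_right
          (sum_le_sum_of_subset_of_nonneg (filter_subset _ _) fun u hu _ => hδ u hu)
          (sum_nonneg fun u hu => hδ u (mem_filter.1 hu).1)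
    _ ≤ (∑ u ∈ T, δ u) * (d * ∑ u ∈ T, δ u) := by
        rw [← mul_sum]
        exact mul_le_mul_of_nonneg_left hl1 hγ
    _ = d * (∑ u ∈ T, δ u) ^ 2 := by ring

lemma wInit_mono {ι A : Type*} [DecidableEq A] {I J : Finset ι} (h : I ⊆ J)
    (S : ι → Finset A) (bmin dmax : ℝ) (i : A) :
    wInit I S bmin dmax i ≤ wInit J S bmin dmax i :=
  sum_le_sum_of_subset_of_nonneg (filter_subset_filter _ (filter_subset_filter _ h))
    fun _ _ _ => by positivity

lemma rFrac_nonneg {ι A : Type*} [DecidableEq A] (I : Finset ι)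
    (S : ι → Finset A) (bmin dmax τ : ℝ) (i : A) : 0 ≤ rFrac I S bmin dmax τ i := by
  unfold rFrac wTrunc
  split_ifs with h
  · exact div_nonneg (sub_nonneg.2 (min_le_left _ _)) h.le
  · exact le_rfl

lemma rFrac_mono {ι A : Type*} [DecidableEq A] {I J : Finset ι} (h : I ⊆ J)
    (S : ι → Finset A) (bmin dmax : ℝ) {τ : ℝ} (hτ : 0 ≤ τ) (i : A) :
    rFrac I S bmin dmax τ i ≤ rFrac J S bmin dmax τ i := by
  have hw := wInit_mono h S bmin dmax i
  by_cases h0 : 0 < wInit I S bmin dmax i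
  · have h1 := h0.trans_le hw
    rw [rFrac, rFrac, if_pos h0, if_pos h1, wTrunc, wTrunc, div_le_div_iff₀ h0 h1]
    rcases le_total (wInit I S bmin dmax i) τ with ha | ha
    · rw [min_eq_left ha, sub_self, zero_mul]
      exact mul_nonneg (sub_nonneg.2 (min_le_left _ _)) h0.le
    · rw [min_eq_right ha, min_eq_right (ha.trans hw)]
      nlinarith [mul_le_mul_of_nonneg_left hw hτ]
  · rw [rFrac, if_neg h0]
    exact rFrac_nonneg ..

lemma eUser_nonneg {ι A : Type*} [DecidableEq A] (I : Finset ι)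
    (S : ι → Finset A) (bmin dmax τ : ℝ) (u : ι) : 0 ≤ eUser I S bmin dmax τ u :=
  mul_nonneg (by positivity) (sum_nonneg fun i _ => rFrac_nonneg I S bmin dmax τ i)

lemma eUser_mono {ι A : Type*} [DecidableEq A] {I J : Finset ι} (h : I ⊆ J)
    (S : ι → Finset A) (bmin dmax : ℝ) {τ : ℝ} (hτ : 0 ≤ τ) (u : ι) :
    eUser I S bmin dmax τ u ≤ eUser J S bmin dmax τ u :=
  mul_le_mul_of_nonneg_left (sum_le_sum fun i _ => rFrac_mono h S bmin dmax hτ i)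
    (by positivity)

/-- **ℓ2 bound on the change in rerouted weight.** With `e_v := 0` and
`γ = Σ_{u ∈ I_adapt ∪ I'_adapt} (e'_u − e_u)` (where `e'_u`, `e_u` are taken to be `0` for
users not in the respective adaptive sets; note `v ∉ I_adapt` as `v ∉ I`), one has
`Σ_{i ∈ (∪_{u ∈ I} S_u) ∪ S_v} (w'_reroute(i) − w_reroute(i))² ≤ α²γ²/d_max` (the unprimed
rerouted weight vanishes automatically on items outside `∪_{u ∈ I} S_u`). -/
theorem mad_reroute_l2_bound {ι A : Type*} [DecidableEq ι] [DecidableEq A]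
    (I : Finset ι) (S : ι → Finset A) (v : ι) (hv : v ∉ I)
    (hne : ∀ u ∈ insert v I, (S u).Nonempty)
    (τ dmax bmin α : ℝ)
    (hτ : 1 ≤ τ) (hdmax : 4 ≤ dmax) (hbmin1 : 1 / 2 ≤ bmin) (hbmin2 : bmin ≤ 1)
    (hα : α = bmin - 1 / (2 * Real.sqrt dmax))
    (γ : ℝ)
    (hγ : γ = ∑ u ∈ adaptSet I S bmin dmax ∪ adaptSet (insert v I) S bmin dmax,
      ((if u ∈ adaptSet (insert v I) S bmin dmax then eUser (insert v I) S bmin dmax τ u else 0) -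
        (if u ∈ adaptSet I S bmin dmax then eUser I S bmin dmax τ u else 0))) :
    ∑ i ∈ I.biUnion S ∪ S v,
        (wReroute (insert v I) S bmin dmax τ α i - wReroute I S bmin dmax τ α i) ^ 2 ≤
      α ^ 2 * γ ^ 2 / dmax := by
  have hIJ : I ⊆ insert v I := subset_insert v I
  have hsub : adaptSet I S bmin dmax ⊆ adaptSet (insert v I) S bmin dmax :=
    filter_subset_filter _ hIJ
  rw [union_eq_right.2 hsub] at hγ
  have hd : ∀ u ∈ adaptSet (insert v I) S bmin dmax, ((S u).card : ℝ) ≤ dmax :=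
    fun u hu => (mem_filter.1 hu).2.2
  have hR : ∀ i, wReroute (insert v I) S bmin dmax τ α i - wReroute I S bmin dmax τ α i =
      α / dmax * ∑ u ∈ (adaptSet (insert v I) S bmin dmax).filter (fun u => i ∈ S u),
        ((if u ∈ adaptSet (insert v I) S bmin dmax then
            eUser (insert v I) S bmin dmax τ u else 0) -
          (if u ∈ adaptSet I S bmin dmax then eUser I S bmin dmax τ u else 0)) := by
    intro i
    rw [sum_sub_distrib, mul_sub, mul_sum, mul_sum, wReroute, wReroute]
    congr 1
    · refine sum_congr rfl fun u hu => ?_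
      rw [if_pos (mem_filter.1 hu).1]
      ring
    · -- The sum over the old adaptive users extends by zero to the new adaptive set.
      rw [← sum_subset (filter_subset_filter (fun u => i ∈ S u) hsub)]
      · refine sum_congr rfl fun u hu => ?_
        rw [if_pos (mem_filter.1 hu).1]
        ring
      · intro u hu hu'
        rw [if_neg fun h => hu' (mem_filter.2 ⟨h, (mem_filter.1 hu).2⟩), mul_zero]
  generalize adaptSet (insert v I) S bmin dmax = T at *
  have hδ : ∀ u ∈ T, 0 ≤ (if u ∈ T then eUser (insert v I) S bmin dmax τ u else 0) -
      (if u ∈ adaptSet I S bmin dmax then eUser I S bmin dmax τ u else 0) := by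
    intro u hu
    rw [if_pos hu, sub_nonneg]
    split_ifs
    · exact eUser_mono hIJ S bmin dmax (zero_le_one.trans hτ) u
    · exact eUser_nonneg ..
  have key := sum_sq_le_of_card_le T S (I.biUnion S ∪ S v) _ dmax hδ hd
  rw [← hγ] at key
  simp_rw [hR, mul_pow]
  rw [← mul_sum]
  refine (mul_le_mul_of_nonneg_left key (sq_nonneg _)).trans_eq ?_
  have : dmax ≠ 0 := by positivity
  field_simp
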